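/- For all positive integers n and k, u(n, n+k) ≥ ε(n, n+k) − 2^{k−1} − 1, where u(n,n+k) is the maximum over all binary n×(n+k) matrices A of the minimum cardinality of a nonempty 1-free set of columns of A, and ε(n,n+k) is the maximum over all binary n×(n+k) matrices A of the minimum cardinality of a nonempty even set of columns of A. -/

import Mathlib

/-- The stopping distance of a binary matrix `A`: the minimum cardinality of a nonempty
1-free set of columns of `A` (a set of columns is 1-free if no row sums to exactly `1`
over that set). -/
noncomputable def stoppingDistance {m n : ℕ} (A : Fin m → Fin n → ℕ) : ℕ :=
  sInf {c | ∃ S : Finset (Fin n), S.Nonempty ∧ (∀ i, ∑ j ∈ S, A i j ≠ 1) ∧ S.card = c}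

/-- The distance of (the code with parity-check matrix) a binary matrix `A`: the minimum
cardinality of a nonempty even set of columns of `A`. -/
noncomputable def codeDistance {m n : ℕ} (A : Fin m → Fin n → ℕ) : ℕ :=
  sInf {c | ∃ S : Finset (Fin n), S.Nonempty ∧ (∀ i, Even (∑ j ∈ S, A i j)) ∧ S.card = c}

/-- `u m n`: the maximum stopping distance over all `m × n` binary matrices. -/
noncomputable def maxStoppingDistance (m n : ℕ) : ℕ :=
  sSup {d | ∃ A : Fin m → Fin n → ℕ, (∀ i j, A i j ≤ 1) ∧ stoppingDistance A = d}

/-- `ε m n`: the maximum distance over all `m × n` binary matrices. -/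
noncomputable def maxCodeDistance (m n : ℕ) : ℕ :=
  sSup {d | ∃ A : Fin m → Fin n → ℕ, (∀ i j, A i j ≤ 1) ∧ codeDistance A = d}

/-!
The bound is a comparison of two estimates whose leading terms agree.

* Upper bound: the code with an `n × (n + k)` parity-check matrix has at least `2 ^ k` words, and in
  each coordinate at most half of the words are nonzero. Averaging the weight over the nonzero words
  (Plotkin) gives `(2 ^ k - 1) * ε(n, n + k) ≤ (n + k) * 2 ^ (k - 1)`.
* Lower bound: the simplex code of length `2 ^ k - 1` has a parity-check matrix with rows of weight
  three in which every 1-free set has at least `2 ^ (k - 1)` columns. Linking `q - 1` further copies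
  of every column to the original by rows of weight two multiplies this number by `q`. Hence
  `u(n, n + k) ≥ q * 2 ^ (k - 1)` for `q = ⌊(n + k) / (2 ^ k - 1)⌋`.

As `(n + k) / (2 ^ k - 1) < q + 1`, the two estimates differ by less than `2 ^ (k - 1)`.
-/

open Finset Matrix

variable {R C E : Type*}

/-- A set `S` of columns is 1-free if no row of `A` sums to exactly `1` over `S`. The index types
are arbitrary so that matrices can be assembled from blocks. -/
def IsOneFree (A : Matrix R C ℕ) (S : Finset C) : Prop :=
  ∀ i, ∑ j ∈ S, A i j ≠ 1

/-- A set `S` of columns is even if every row of `A` has an even sum over `S`. -/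
def IsEvenSet (A : Matrix R C ℕ) (S : Finset C) : Prop :=
  ∀ i, Even (∑ j ∈ S, A i j)

theorem IsEvenSet.isOneFree {A : Matrix R C ℕ} {S : Finset C} (hS : IsEvenSet A S) :
    IsOneFree A S :=
  fun i hi => Nat.not_even_one (hi ▸ hS i)

theorem sInf_card_le [Fintype C] (p : Finset C → Prop) :
    sInf {c | ∃ S : Finset C, S.Nonempty ∧ p S ∧ #S = c} ≤ Fintype.card C := by
  rcases Set.eq_empty_or_nonempty {c | ∃ S : Finset C, S.Nonempty ∧ p S ∧ #S = c} with
    hempty | hne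
  · rw [hempty, Nat.sInf_empty]
    exact Nat.zero_le _
  · obtain ⟨S, -, -, hS⟩ := Nat.sInf_mem hne
    exact hS ▸ card_le_univ S

theorem IsOneFree.map_of_submatrix {R' C' : Type*} {A : Matrix R C ℕ} {f : R' → R}
    (hf : f.Surjective) {g : C' ↪ C} {S : Finset C'} (hS : IsOneFree (A.submatrix f g) S) :
    IsOneFree A (S.map g) := by
  intro i
  obtain ⟨i, rfl⟩ := hf i
  rw [sum_map]
  exact hS i

section PlotkinBound

theorem card_mul_card_filter_ne_zero_le {H G : Type*} [AddGroup H] [AddGroup G] [Fintype H]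
    [Fintype G] [DecidableEq G] (f : H →+ G) :
    Fintype.card G * #{h | f h ≠ 0} ≤ (Fintype.card G - 1) * Fintype.card H := by
  have hker : Nat.card f.ker = #{h | f h = 0} := by
    simp [Nat.card_eq_fintype_card, Fintype.card_subtype, AddMonoidHom.mem_ker]
  have hcard : Fintype.card H ≤ Fintype.card G * #{h | f h = 0} := by
    rw [← Nat.card_eq_fintype_card, ← Nat.card_eq_fintype_card, ← f.ker.card_mul_index,
      AddSubgroup.index_ker, hker, mul_comm]
    exact Nat.mul_le_mul_right _ (Nat.card_le_card_of_injective _ Subtype.val_injective)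
  have hsplit : #{h | f h = 0} + #{h | f h ≠ 0} = Fintype.card H :=
    card_filter_add_card_filter_not _
  rw [Nat.sub_mul, one_mul]
  refine Nat.le_sub_of_add_le ?_
  calc Fintype.card G * #{h | f h ≠ 0} + Fintype.card H
      ≤ Fintype.card G * #{h | f h ≠ 0} + Fintype.card G * #{h | f h = 0} := by gcongr
    _ = Fintype.card G * Fintype.card H := by rw [← hsplit]; ring

theorem sum_hammingNorm_le {G : Type*} [AddGroup G] [Fintype G] [DecidableEq G] [Fintype C]
    (K : AddSubgroup (C → G)) [Fintype K] :
    Fintype.card G * ∑ c : K, hammingNorm c.1 ≤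
      Fintype.card C * ((Fintype.card G - 1) * Fintype.card K) := by
  calc Fintype.card G * ∑ c : K, hammingNorm c.1
      = ∑ j : C, Fintype.card G * #{c : K | c.1 j ≠ 0} := by
        rw [← mul_sum]
        exact congrArg _ (sum_card_bipartiteAbove_eq_sum_card_bipartiteBelow
          fun (c : K) j => c.1 j ≠ 0)
    _ ≤ ∑ _j : C, (Fintype.card G - 1) * Fintype.card K :=
        sum_le_sum fun j _ =>
          card_mul_card_filter_ne_zero_le ((Pi.evalAddMonoidHom (fun _ => G) j).comp K.subtype)
    _ = _ := by simp

theorem plotkin_bound {G : Type*} [AddGroup G] [Fintype G] [DecidableEq G] [Fintype C]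
    (K : AddSubgroup (C → G)) {d : ℕ} (hd : ∀ c ∈ K, c ≠ 0 → d ≤ hammingNorm c) :
    Fintype.card G * ((Nat.card K - 1) * d) ≤
      Fintype.card C * ((Fintype.card G - 1) * Nat.card K) := by
  classical
  have := Fintype.ofFinite K
  rw [Nat.card_eq_fintype_card]
  refine le_trans (Nat.mul_le_mul_left _ ?_) (sum_hammingNorm_le K)
  calc (Fintype.card K - 1) * d = #(univ.erase (0 : K)) * d := by simp
    _ ≤ ∑ c ∈ univ.erase (0 : K), hammingNorm c.1 :=
        card_nsmul_le_sum _ _ _ fun c hc => hd c.1 c.2 (by simpa using hc)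
    _ ≤ ∑ c : K, hammingNorm c.1 := sum_le_sum_of_subset (erase_subset _ _)

end PlotkinBound

section ParityCode

variable [Fintype C]

/-- The binary linear code with parity-check matrix `A`, read modulo `2`. -/
def parityCode (A : Matrix R C ℕ) : Submodule (ZMod 2) (C → ZMod 2) :=
  LinearMap.ker (A.map (Nat.cast : ℕ → ZMod 2)).mulVecLin

theorem isEvenSet_support {A : Matrix R C ℕ} {c : C → ZMod 2} (hc : c ∈ parityCode A) :
    IsEvenSet A {j | c j ≠ 0} := by
  intro i
  have hbit : ∀ a x : ZMod 2, (if x ≠ 0 then a else 0) = a * x := by decide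
  have hrow : ∑ j, (A i j : ZMod 2) * c j = 0 := congrFun (LinearMap.mem_ker.mp hc) i
  rw [← ZMod.natCast_eq_zero_iff_even, Nat.cast_sum, sum_filter]
  exact (sum_congr rfl fun j _ => hbit _ _).trans hrow

theorem two_pow_le_card_parityCode [Fintype R] (A : Matrix R C ℕ) :
    2 ^ (Fintype.card C - Fintype.card R) ≤ Nat.card (parityCode A) := by
  let f := (A.map (Nat.cast : ℕ → ZMod 2)).mulVecLin
  have hrank := f.finrank_range_add_finrank_ker
  have hrange := (LinearMap.range f).finrank_le
  rw [Module.finrank_fintype_fun_eq_card] at hrank hrange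
  rw [Module.natCard_eq_pow_finrank (K := ZMod 2), Nat.card_zmod]
  exact Nat.pow_le_pow_right two_pos (Nat.sub_le_iff_le_add'.mpr (by
    rw [← hrank]; exact Nat.add_le_add_right hrange _))

theorem exists_nonempty_isEvenSet [Fintype R] (hRC : Fintype.card R < Fintype.card C)
    (A : Matrix R C ℕ) : ∃ S : Finset C, S.Nonempty ∧ IsEvenSet A S := by
  have hcard : 1 < Nat.card (parityCode A) :=
    (Nat.one_lt_two_pow (Nat.sub_pos_of_lt hRC).ne').trans_le (two_pow_le_card_parityCode A)
  have := Finite.one_lt_card_iff_nontrivial.mp hcard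
  obtain ⟨c, hc, hc0⟩ := (parityCode A).exists_mem_ne_zero_of_ne_bot
    ((parityCode A).nontrivial_iff_ne_bot.mp this)
  exact ⟨({j | c j ≠ 0} : Finset C), card_pos.mp (hammingNorm_pos_iff.mpr hc0),
    isEvenSet_support hc⟩

end ParityCode

theorem exists_codeDistance_eq_maxCodeDistance (m n : ℕ) :
    ∃ A : Matrix (Fin m) (Fin n) ℕ, codeDistance A = maxCodeDistance m n := by
  have hbdd : BddAbove {d | ∃ A : Matrix (Fin m) (Fin n) ℕ, (∀ i j, A i j ≤ 1) ∧
      codeDistance A = d} :=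
    ⟨n, by rintro _ ⟨A, -, rfl⟩; exact (sInf_card_le _).trans_eq (Fintype.card_fin n)⟩
  obtain ⟨A, -, hA⟩ := Nat.sSup_mem (by exact ⟨_, 0, by simp, rfl⟩) hbdd
  exact ⟨A, hA⟩

theorem codeDistance_le_hammingNorm {m n : ℕ} {A : Matrix (Fin m) (Fin n) ℕ} {c : Fin n → ZMod 2}
    (hc : c ∈ parityCode A) (hc0 : c ≠ 0) : codeDistance A ≤ hammingNorm c :=
  Nat.sInf_le ⟨_, card_pos.mp (hammingNorm_pos_iff.mpr hc0), isEvenSet_support hc, rfl⟩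

theorem two_mul_codeDistance_le {m n : ℕ} (A : Matrix (Fin m) (Fin n) ℕ) :
    2 * ((2 ^ (n - m) - 1) * codeDistance A) ≤ n * 2 ^ (n - m) := by
  set M := Nat.card (parityCode A)
  set d := codeDistance A
  have hplotkin : 2 * ((M - 1) * d) ≤ n * M := by
    simpa [ZMod.card] using plotkin_bound (parityCode A).toAddSubgroup
      fun c hc hc0 => codeDistance_le_hammingNorm hc hc0
  have hle : 2 ^ (n - m) ≤ M := by simpa using two_pow_le_card_parityCode A
  have hratio : M * (2 ^ (n - m) - 1) ≤ 2 ^ (n - m) * (M - 1) := by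
    rw [Nat.mul_sub, Nat.mul_sub, mul_comm M]
    omega
  refine Nat.le_of_mul_le_mul_left ?_ (Nat.card_pos : 0 < M)
  calc M * (2 * ((2 ^ (n - m) - 1) * d)) = 2 * (M * (2 ^ (n - m) - 1) * d) := by ring
    _ ≤ 2 * (2 ^ (n - m) * (M - 1) * d) := by gcongr
    _ = 2 ^ (n - m) * (2 * ((M - 1) * d)) := by ring
    _ ≤ 2 ^ (n - m) * (n * M) := by gcongr
    _ = M * (n * 2 ^ (n - m)) := by ring

theorem two_mul_maxCodeDistance_le (m n : ℕ) :
    2 * ((2 ^ (n - m) - 1) * maxCodeDistance m n) ≤ n * 2 ^ (n - m) := by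
  obtain ⟨A, hmax⟩ := exists_codeDistance_eq_maxCodeDistance m n
  exact hmax ▸ two_mul_codeDistance_le A

theorem bddAbove_stoppingDistance (m n : ℕ) : BddAbove {d | ∃ A : Matrix (Fin m) (Fin n) ℕ,
    (∀ i j, A i j ≤ 1) ∧ stoppingDistance A = d} :=
  ⟨n, by rintro _ ⟨A, -, rfl⟩; exact (sInf_card_le _).trans_eq (Fintype.card_fin n)⟩

theorem exists_forall_maxStoppingDistance_le (m n : ℕ) : ∃ A : Matrix (Fin m) (Fin n) ℕ,
    (∀ i j, A i j ≤ 1) ∧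
      ∀ S : Finset (Fin n), S.Nonempty → IsOneFree A S → maxStoppingDistance m n ≤ #S := by
  obtain ⟨A, hA, hmax⟩ := Nat.sSup_mem (by exact ⟨_, 0, by simp, rfl⟩)
    (bddAbove_stoppingDistance m n)
  exact ⟨A, hA, fun S hS hfree => hmax.symm.trans_le (Nat.sInf_le ⟨S, hS, hfree, rfl⟩)⟩

theorem le_maxStoppingDistance [Fintype R] [Fintype C] (hRC : Fintype.card R < Fintype.card C)
    {A : Matrix R C ℕ} (hA : ∀ i j, A i j ≤ 1) {d : ℕ}
    (hd : ∀ S : Finset C, S.Nonempty → IsOneFree A S → d ≤ #S) :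
    d ≤ maxStoppingDistance (Fintype.card R) (Fintype.card C) := by
  let eR := (Fintype.equivFin R).symm
  let eC := (Fintype.equivFin C).symm
  let B := A.submatrix eR eC
  have hB : d ≤ stoppingDistance B := by
    obtain ⟨S, hS, hSeven⟩ := exists_nonempty_isEvenSet (by simpa using hRC) B
    refine le_csInf ⟨_, S, hS, hSeven.isOneFree, rfl⟩ ?_
    rintro _ ⟨T, hT, hTfree, rfl⟩
    have hmap : IsOneFree A (T.map eC.toEmbedding) :=
      IsOneFree.map_of_submatrix eR.surjective hTfree
    simpa using hd _ hT.map hmap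
  exact hB.trans <| le_csSup (bddAbove_stoppingDistance _ _) ⟨B, fun _ _ => hA _ _, rfl⟩

theorem IsOneFree.toLeft_fromBlocks {R' C' : Type*} {A : Matrix R C ℕ} {D : Matrix R' C ℕ}
    {F : Matrix R' C' ℕ} {S : Finset (C ⊕ C')} (hS : IsOneFree (fromBlocks A 0 D F) S) :
    IsOneFree A S.toLeft := by
  intro i
  simpa [sum_sum_eq_sum_toLeft_add_sum_toRight] using hS (.inl i)

theorem one_apply_le_one [DecidableEq C] (i j : C) : (1 : Matrix C C ℕ) i j ≤ 1 := by
  rw [one_apply]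
  split_ifs <;> simp

section LinkCopies

variable [DecidableEq C] [DecidableEq E]

/-- Adjoins to `A` a new column for every `e : E`, together with a row of weight two that links it
to the column `f e` of `A`. -/
def linkCopies (A : Matrix R C ℕ) (f : E → C) : Matrix (R ⊕ E) (C ⊕ E) ℕ :=
  fromBlocks A 0 ((1 : Matrix C C ℕ).submatrix f id) 1

theorem linkCopies_le_one {A : Matrix R C ℕ} (hA : ∀ i j, A i j ≤ 1) (f : E → C) (i : R ⊕ E)
    (j : C ⊕ E) : linkCopies A f i j ≤ 1 := by
  rcases i with i | i <;> rcases j with j | j <;> simp [linkCopies, hA, one_apply_le_one]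

theorem IsOneFree.mem_toRight_linkCopies {A : Matrix R C ℕ} {f : E → C} {S : Finset (C ⊕ E)}
    (hS : IsOneFree (linkCopies A f) S) (e : E) : e ∈ S.toRight ↔ f e ∈ S.toLeft := by
  have hrow : (if f e ∈ S.toLeft then 1 else 0) + (if e ∈ S.toRight then 1 else 0) ≠ 1 := by
    simpa [linkCopies, sum_sum_eq_sum_toLeft_add_sum_toRight, one_apply] using hS (.inr e)
  grind

theorem IsOneFree.succ_mul_le_card_linkCopies [Fintype E] {A : Matrix R C ℕ} {d q : ℕ}
    (hd : ∀ T : Finset C, T.Nonempty → IsOneFree A T → d ≤ #T) {f : E → C}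
    (hf : ∀ c, q ≤ #{e | f e = c}) {S : Finset (C ⊕ E)} (hS : S.Nonempty)
    (hfree : IsOneFree (linkCopies A f) S) : (q + 1) * d ≤ #S := by
  have hlink := hfree.mem_toRight_linkCopies
  have hleft : S.toLeft.Nonempty := by
    obtain ⟨c | e, hx⟩ := hS
    · exact ⟨c, mem_toLeft.mpr hx⟩
    · exact ⟨f e, (hlink e).mp (mem_toRight.mpr hx)⟩
  have hcopies : q * #S.toLeft ≤ #S.toRight :=
    mul_card_image_le_card_of_maps_to (fun e he => (hlink e).mp he) q fun c hc =>
      (hf c).trans <| card_le_card fun e he => by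
        obtain rfl : f e = c := by simpa using he
        exact mem_filter.mpr ⟨(hlink e).mpr hc, rfl⟩
  calc (q + 1) * d ≤ (q + 1) * #S.toLeft :=
        Nat.mul_le_mul_left _ (hd _ hleft hfree.toLeft_fromBlocks)
    _ = #S.toLeft + q * #S.toLeft := by ring
    _ ≤ #S.toLeft + #S.toRight := by gcongr
    _ = #S := card_toLeft_add_card_toRight

theorem succ_mul_maxStoppingDistance_le {m n : ℕ} (hmn : m < n) (q r : ℕ) :
    (q + 1) * maxStoppingDistance m n ≤
      maxStoppingDistance (m + (n * q + r)) (n + (n * q + r)) := by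
  obtain ⟨A, hA, hd⟩ := exists_forall_maxStoppingDistance_le m n
  let f : Fin n × Fin q ⊕ Fin r → Fin n := Sum.elim Prod.fst fun _ => ⟨0, Nat.zero_lt_of_lt hmn⟩
  have hf (c : Fin n) : q ≤ #{e | f e = c} := by
    simpa using card_le_card_of_injOn (s := (univ : Finset (Fin q))) (t := {e | f e = c})
      (fun i => .inl (c, i)) (fun i _ => by simp [f]) (fun _ _ _ _ hij => by simpa using hij)
  simpa using le_maxStoppingDistance (by simpa using hmn) (linkCopies_le_one hA f)
    fun S hS hfree => hfree.succ_mul_le_card_linkCopies hd hf hS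

end LinkCopies

section SimplexStep

variable [DecidableEq C]

/-- The recursion step for parity-check matrices of simplex codes: adjoins to `A` a second copy of
every column and one apex column, together with a row of weight three for every column of `A`,
containing the column, its copy and the apex. -/
def simplexStep (A : Matrix R C ℕ) : Matrix (R ⊕ C) (C ⊕ (C ⊕ Unit)) ℕ :=
  fromBlocks A 0 1 (fromCols 1 (replicateCol Unit 1))

theorem simplexStep_le_one {A : Matrix R C ℕ} (hA : ∀ i j, A i j ≤ 1) (i : R ⊕ C)
    (j : C ⊕ (C ⊕ Unit)) : simplexStep A i j ≤ 1 := by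
  rcases i with i | i <;> rcases j with j | j | _ <;> simp [simplexStep, hA, one_apply_le_one]

theorem IsOneFree.row_simplexStep {A : Matrix R C ℕ} {S : Finset (C ⊕ (C ⊕ Unit))}
    (hS : IsOneFree (simplexStep A) S) (c : C) :
    (if c ∈ S.toLeft then 1 else 0) +
      ((if c ∈ S.toRight.toLeft then 1 else 0) + #S.toRight.toRight) ≠ 1 := by
  simpa [simplexStep, sum_sum_eq_sum_toLeft_add_sum_toRight, one_apply] using hS (.inr c)

theorem IsOneFree.min_le_card_simplexStep [Fintype C] {A : Matrix R C ℕ} {d : ℕ}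
    (hd : ∀ T : Finset C, T.Nonempty → IsOneFree A T → d ≤ #T)
    {S : Finset (C ⊕ (C ⊕ Unit))} (hS : S.Nonempty) (hfree : IsOneFree (simplexStep A) S) :
    min (2 * d) (Fintype.card C + 1) ≤ #S := by
  have hcard : #S = #S.toLeft + (#S.toRight.toLeft + #S.toRight.toRight) := by
    rw [card_toLeft_add_card_toRight, card_toLeft_add_card_toRight]
  have hrow := hfree.row_simplexStep
  rcases S.toRight.toRight.eq_empty_or_nonempty with hapex | hapex
  · have hcopy : S.toRight.toLeft = S.toLeft := by
      ext c
      have := hrow c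
      rw [hapex] at this
      grind
    rw [hcopy, hapex, card_empty, add_zero, ← two_mul] at hcard
    have hleft : S.toLeft.Nonempty := card_pos.mp (by have := hS.card_pos; omega)
    have := hd _ hleft hfree.toLeft_fromBlocks
    omega
  · have hone : #S.toRight.toRight = 1 :=
      le_antisymm (card_le_one_of_subsingleton _) hapex.card_pos
    have hcover : S.toLeft ∪ S.toRight.toLeft = univ := by
      ext c
      have := hrow c
      rw [hone] at this
      grind
    have := card_union_le S.toLeft S.toRight.toLeft
    rw [hcover, card_univ] at this
    omega

theorem min_le_maxStoppingDistance {m n : ℕ} (hmn : m ≤ n) :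
    min (2 * maxStoppingDistance m n) (n + 1) ≤ maxStoppingDistance (m + n) (n + (n + 1)) := by
  obtain ⟨A, hA, hd⟩ := exists_forall_maxStoppingDistance_le m n
  simpa using le_maxStoppingDistance (by simp; omega) (simplexStep_le_one hA)
    fun S hS hfree => hfree.min_le_card_simplexStep hd hS

end SimplexStep

theorem two_pow_le_maxStoppingDistance (k : ℕ) :
    2 ^ k ≤ maxStoppingDistance (2 ^ (k + 1) - (k + 2)) (2 ^ (k + 1) - 1) := by
  induction k with
  | zero =>
    simpa using le_maxStoppingDistance (R := Fin 0) (C := Fin 1) (A := 0) (d := 1) (by simp)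
      (by simp) fun S hS _ => hS.card_pos
  | succ k ih =>
    have hlt : k + 2 ≤ 2 ^ (k + 1) := Nat.lt_two_pow_self
    have : 2 ^ (k + 1 + 1) = 2 * 2 ^ (k + 1) := pow_succ' 2 (k + 1)
    have hrows : 2 ^ (k + 1 + 1) - (k + 1 + 2) =
        2 ^ (k + 1) - (k + 2) + (2 ^ (k + 1) - 1) := by omega
    have hcols : 2 ^ (k + 1 + 1) - 1 = 2 ^ (k + 1) - 1 + (2 ^ (k + 1) - 1 + 1) := by omega
    rw [hrows, hcols]
    refine le_trans (le_min ?_ le_tsub_add) (min_le_maxStoppingDistance (by omega))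
    exact (pow_succ' 2 k).trans_le (Nat.mul_le_mul_left 2 ih)

theorem div_mul_two_pow_le_maxStoppingDistance (n k : ℕ) :
    (n + k + 1) / (2 ^ (k + 1) - 1) * 2 ^ k ≤ maxStoppingDistance n (n + k + 1) := by
  set P := 2 ^ (k + 1) - 1
  have hlt : k + 2 ≤ 2 ^ (k + 1) := Nat.lt_two_pow_self
  have hdivmod := Nat.div_add_mod (n + k + 1) P
  rcases h : (n + k + 1) / P with _ | q
  · simp
  · rw [h, Nat.mul_succ] at hdivmod
    set r := (n + k + 1) % P
    have hrows : n = 2 ^ (k + 1) - (k + 2) + (P * q + r) := by omega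
    have hcols : n + k + 1 = P + (P * q + r) := by omega
    calc (q + 1) * 2 ^ k
        ≤ (q + 1) * maxStoppingDistance (2 ^ (k + 1) - (k + 2)) P := by
          gcongr
          exact two_pow_le_maxStoppingDistance k
      _ ≤ maxStoppingDistance (2 ^ (k + 1) - (k + 2) + (P * q + r)) (P + (P * q + r)) :=
          succ_mul_maxStoppingDistance_le (by omega) q r
      _ = maxStoppingDistance n (n + k + 1) := by rw [← hrows, ← hcols]

theorem stmt_8_general (n k : ℕ) (hk : 0 < k) :
    maxCodeDistance n (n + k) < maxStoppingDistance n (n + k) + 2 ^ (k - 1) := by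
  obtain ⟨k, rfl⟩ := Nat.exists_eq_add_one.mpr hk
  rw [Nat.add_sub_cancel, ← add_assoc]
  set P := 2 ^ (k + 1) - 1 with hP
  have hPpos : 0 < P := Nat.sub_pos_of_lt (Nat.one_lt_two_pow k.succ_ne_zero)
  have hupper : P * maxCodeDistance n (n + k + 1) ≤ (n + k + 1) * 2 ^ k := by
    have := two_mul_maxCodeDistance_le n (n + k + 1)
    rw [add_assoc n, Nat.add_sub_cancel_left, ← hP, pow_succ] at this
    rw [add_assoc n]
    linarith
  have hlower := div_mul_two_pow_le_maxStoppingDistance n k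
  suffices maxCodeDistance n (n + k + 1) < ((n + k + 1) / P + 1) * 2 ^ k by linarith
  refine Nat.lt_of_mul_lt_mul_left (a := P) (hupper.trans_lt ?_)
  calc (n + k + 1) * 2 ^ k < P * ((n + k + 1) / P + 1) * 2 ^ k := by
        gcongr
        exact Nat.lt_mul_div_succ _ hPpos
    _ = P * (((n + k + 1) / P + 1) * 2 ^ k) := mul_assoc _ _ _

/-- For all positive integers `n` and `k`, `u(n, n+k) ≥ ε(n, n+k) − 2^(k−1) − 1`. -/
theorem stmt_8 (n k : ℕ) (hn : 0 < n) (hk : 0 < k) :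
    maxCodeDistance n (n + k) - 2 ^ (k - 1) - 1 ≤ maxStoppingDistance n (n + k) := by
  have := stmt_8_general n k hk
  omega
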